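/- arXiv:1108.3367 — 2 statements merged into one kernel-verified Lean document; each statement's English description precedes it below -/
import Mathlib

section
/- Let p₋₂, p₋₁, p₋₁', p₀, p₀', q₀, q₀' be complex numbers with p₋₂ ≠ 0 and q₀' ≠ 0, and let a, a', b, b' : ℕ → ℂ satisfy a_{n+1} = p₋₂·n² + p₋₁·n + p₀ + O(n^{−1}), a'_n = p₋₂·n² + p₋₁'·n + p₀' + O(n^{−1}) (equal leading coefficients, the class D⁼₂₀), b_{n+1} = q₀ + O(n^{−1}), b'_n = q₀' + O(n^{−1}). Suppose X : ℕ → ℂ satisfies the tail recurrence (b'_n·b_{n+1} + a_{n+1})·X_n + b'_n·X_n·X_{n+1} − a'_n·X_{n+1} − a'_n·b_{n+1} = 0 for all n ≥ 1, and X_n = τ₋₄·n² + τ₋₃·n^{3/2} + τ₋₂·n + τ₋₁·n^{1/2} + τ₀ + O(n^{−1/2}) for some complex τ₋₄, τ₋₃, τ₋₂, τ₋₁, τ₀. Then τ₋₄ = 0 and τ₋₃ = 0. -/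
open Asymptotics Filter

/-- `n^s` as a complex number, for `n : ℕ` and a real exponent `s`. -/
noncomputable def rpowC (s : ℝ) (n : ℕ) : ℂ := (((n : ℝ) ^ s : ℝ) : ℂ)

open Topology

lemma rpowC_half_sq (n : ℕ) : rpowC (1 / 2) n ^ 2 = n := by
  rw [rpowC, ← Real.sqrt_eq_rpow, ← Complex.ofReal_pow, Real.sq_sqrt n.cast_nonneg,
    Complex.ofReal_natCast]

lemma rpowC_three_halves (n : ℕ) : rpowC (3 / 2) n = rpowC (1 / 2) n ^ 3 := by
  rw [rpowC, rpowC, ← Complex.ofReal_pow, ← Real.rpow_natCast, ← Real.rpow_mul n.cast_nonneg]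
  norm_num

lemma tendsto_inv_sqrt_natCast : Tendsto (fun n : ℕ => (Real.sqrt n)⁻¹) atTop (𝓝 0) :=
  tendsto_inv_atTop_zero.comp (Real.tendsto_sqrt_atTop.comp tendsto_natCast_atTop_atTop)

lemma tendsto_inv_rpowC_half : Tendsto (fun n : ℕ => (rpowC (1 / 2) n)⁻¹) atTop (𝓝 0) := by
  refine ((Complex.continuous_ofReal.tendsto 0).comp tendsto_inv_sqrt_natCast).congr fun n => ?_
  simp [rpowC, Real.sqrt_eq_rpow]

lemma tendsto_rpowC_half_succ_sub :
    Tendsto (fun n : ℕ => rpowC (1 / 2) (n + 1) - rpowC (1 / 2) n) atTop (𝓝 0) := by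
  have key : Tendsto (fun n : ℕ => Real.sqrt ((n + 1 : ℕ) : ℝ) - Real.sqrt n) atTop (𝓝 0) := by
    refine tendsto_of_tendsto_of_tendsto_of_le_of_le' tendsto_const_nhds
      tendsto_inv_sqrt_natCast ?_ ?_
    · exact .of_forall fun n => sub_nonneg.2 (Real.sqrt_le_sqrt (by simp))
    · filter_upwards [eventually_ge_atTop 1] with n hn
      have hpos : 0 < Real.sqrt n := Real.sqrt_pos.2 (by exact_mod_cast hn)
      rw [← one_div, le_div_iff₀ hpos]
      have h₁ := Real.sq_sqrt (Nat.cast_nonneg (α := ℝ) n)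
      have h₂ := Real.sq_sqrt (Nat.cast_nonneg (α := ℝ) (n + 1))
      push_cast at h₂ ⊢
      nlinarith [sq_nonneg (Real.sqrt (n + 1 : ℝ) - Real.sqrt n)]
  refine ((Complex.continuous_ofReal.tendsto 0).comp key).congr fun n => ?_
  simp [rpowC, Real.sqrt_eq_rpow]

/-- A sequence that is big-O of a negative power of `n` tends to zero. -/
lemma tendsto_zero_of_isBigO_rpow_neg {f : ℕ → ℂ} {s : ℝ} (hs : 0 < s)
    (h : f =O[atTop] fun n : ℕ => (n : ℝ) ^ (-s)) : Tendsto f atTop (𝓝 0) :=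
  h.trans_tendsto ((tendsto_rpow_neg_atTop hs).comp tendsto_natCast_atTop_atTop)

/-- Class D⁼₂₀: the tail expansion has `τ₋₄ = 0` and `τ₋₃ = 0`. -/
theorem stmt3 (pm2 pm1 pm1' p₀ p₀' q₀ q₀' : ℂ)
    (hpm2 : pm2 ≠ 0) (hq₀' : q₀' ≠ 0)
    (a a' b b' : ℕ → ℂ)
    (ha : (fun n : ℕ => a (n + 1) - (pm2 * n ^ 2 + pm1 * n + p₀))
      =O[atTop] fun n : ℕ => (n : ℝ) ^ (-(1 : ℝ)))
    (ha' : (fun n : ℕ => a' n - (pm2 * n ^ 2 + pm1' * n + p₀'))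
      =O[atTop] fun n : ℕ => (n : ℝ) ^ (-(1 : ℝ)))
    (hb : (fun n : ℕ => b (n + 1) - q₀)
      =O[atTop] fun n : ℕ => (n : ℝ) ^ (-(1 : ℝ)))
    (hb' : (fun n : ℕ => b' n - q₀')
      =O[atTop] fun n : ℕ => (n : ℝ) ^ (-(1 : ℝ)))
    (X : ℕ → ℂ)
    (hrec : ∀ n : ℕ, 1 ≤ n →
      (b' n * b (n + 1) + a (n + 1)) * X n + b' n * X n * X (n + 1)
        - a' n * X (n + 1) - a' n * b (n + 1) = 0)
    (τm4 τm3 τm2 τm1 τ0 : ℂ)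
    (hX : (fun n : ℕ => X n
        - (τm4 * n ^ 2 + τm3 * rpowC (3 / 2) n + τm2 * n
            + τm1 * rpowC (1 / 2) n + τ0))
      =O[atTop] fun n : ℕ => (n : ℝ) ^ (-(1 / 2 : ℝ))) :
    τm4 = 0 ∧ τm3 = 0 := by
  have ta := tendsto_zero_of_isBigO_rpow_neg one_pos ha
  have ta' := tendsto_zero_of_isBigO_rpow_neg one_pos ha'
  have tb : Tendsto (fun n => b (n + 1)) atTop (𝓝 q₀) :=
    tendsto_sub_nhds_zero_iff.1 (tendsto_zero_of_isBigO_rpow_neg one_pos hb)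
  have tb' : Tendsto b' atTop (𝓝 q₀') :=
    tendsto_sub_nhds_zero_iff.1 (tendsto_zero_of_isBigO_rpow_neg one_pos hb')
  have tX := tendsto_zero_of_isBigO_rpow_neg one_half_pos hX
  simp only [rpowC_three_halves] at tX
  have hs2 := rpowC_half_sq
  have tu := tendsto_inv_rpowC_half
  have tv := tendsto_rpowC_half_succ_sub
  generalize rpowC (1 / 2) = s at hs2 tu tv tX
  have hs0 : ∀ n : ℕ, 1 ≤ n → s n ≠ 0 := fun n hn h => by
    have := hs2 n
    rw [h, zero_pow two_ne_zero] at this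
    exact (Nat.cast_ne_zero.2 (by lia : n ≠ 0)) this.symm
  have hs2' : ∀ n : ℕ, s (n + 1) ^ 2 = s n ^ 2 + 1 := fun n => by
    rw [hs2, hs2]; push_cast; rfl
  simp only [← hs2] at ta ta' tX
  have tA' : Tendsto (fun n => a' n * (s n)⁻¹ ^ 4) atTop (𝓝 pm2) := by
    have h := (((ta'.add_const p₀').mul (tu.pow 4)).add
      ((tu.pow 2).const_mul pm1')).add_const pm2
    simp only [zero_pow (two_ne_zero), zero_pow (four_ne_zero), mul_zero, zero_add] at h
    refine h.congr' ?_
    filter_upwards [eventually_ge_atTop 1] with n hn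
    have := hs0 n hn
    field_simp
    ring
  have tdA : Tendsto (fun n => (a (n + 1) - a' n) * (s n)⁻¹ ^ 3) atTop (𝓝 0) := by
    have h := (((ta.sub ta').add_const (p₀ - p₀')).mul (tu.pow 3)).add
      (tu.const_mul (pm1 - pm1'))
    simp only [zero_pow (three_ne_zero), mul_zero, zero_add] at h
    refine h.congr' ?_
    filter_upwards [eventually_ge_atTop 1] with n hn
    have := hs0 n hn
    field_simp
    ring
  have tratio : Tendsto (fun n => s (n + 1) * (s n)⁻¹) atTop (𝓝 1) := by
    have h := (tv.mul tu).add_const 1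
    simp only [mul_zero, zero_add] at h
    refine h.congr' ?_
    filter_upwards [eventually_ge_atTop 1] with n hn
    have := hs0 n hn
    field_simp
    ring
  have h4 : τm4 = 0 := by
    have tY : Tendsto (fun n => X n * (s n)⁻¹ ^ 4) atTop (𝓝 τm4) := by
      have h := (((((tX.add_const τ0).mul (tu.pow 4)).add
        ((tu.pow 3).const_mul τm1)).add ((tu.pow 2).const_mul τm2)).add
        (tu.const_mul τm3)).add_const τm4
      simp only [zero_pow (two_ne_zero), zero_pow (three_ne_zero), zero_pow (four_ne_zero),
        mul_zero, zero_add] at h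
      refine h.congr' ?_
      filter_upwards [eventually_ge_atTop 1] with n hn
      have := hs0 n hn
      field_simp
      ring
    have tZ : Tendsto (fun n => X (n + 1) * (s n)⁻¹ ^ 4) atTop (𝓝 τm4) := by
      have h := (tY.comp (tendsto_add_atTop_nat 1)).mul (tratio.pow 4)
      simp only [one_pow, mul_one] at h
      refine h.congr' ?_
      filter_upwards [eventually_ge_atTop 1] with n hn
      have := hs0 n hn
      have := hs0 (n + 1) (by lia)
      simp only [Function.comp]
      field_simp
    have h := (((((tb'.mul tb).mul (tu.pow 4)).mul tY).add
      ((tdA.mul tu).mul tY)).add ((tb'.mul tY).mul tZ)).add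
      ((tA'.mul (tY.sub tZ)).sub ((tA'.mul tb).mul (tu.pow 4)))
    simp only [zero_pow (four_ne_zero), mul_zero, zero_mul, zero_add, sub_self, add_zero] at h
    have h0 := tendsto_nhds_unique (h.congr' (f₂ := fun _ => (0 : ℂ)) ?_) tendsto_const_nhds
    · simpa [hq₀'] using h0
    filter_upwards [eventually_ge_atTop 1] with n hn
    linear_combination (s n)⁻¹ ^ 8 * hrec n hn
  refine ⟨h4, ?_⟩
  subst h4
  have tR : Tendsto (fun n => X n * (s n)⁻¹ ^ 2 - τm3 * s n) atTop (𝓝 τm2) := by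
    have h := (((tX.add_const τ0).mul (tu.pow 2)).add (tu.const_mul τm1)).add_const τm2
    simp only [zero_pow (two_ne_zero), mul_zero, zero_add] at h
    refine h.congr' ?_
    filter_upwards [eventually_ge_atTop 1] with n hn
    have := hs0 n hn
    field_simp
    ring
  have tV : Tendsto (fun n => X n * (s n)⁻¹ ^ 3) atTop (𝓝 τm3) := by
    have h := (tR.mul tu).add_const τm3
    simp only [mul_zero, zero_add] at h
    refine h.congr' ?_
    filter_upwards [eventually_ge_atTop 1] with n hn
    have := hs0 n hn
    field_simp
    ring
  have tW : Tendsto (fun n => X (n + 1) * (s n)⁻¹ ^ 3) atTop (𝓝 τm3) := by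
    have h := (tV.comp (tendsto_add_atTop_nat 1)).mul (tratio.pow 3)
    simp only [one_pow, mul_one] at h
    refine h.congr' ?_
    filter_upwards [eventually_ge_atTop 1] with n hn
    have := hs0 n hn
    have := hs0 (n + 1) (by lia)
    simp only [Function.comp]
    field_simp
  have tD : Tendsto (fun n => (X n - X (n + 1)) * (s n)⁻¹ ^ 2) atTop (𝓝 0) := by
    have h := (tR.sub ((tR.comp (tendsto_add_atTop_nat 1)).mul (tratio.pow 2))).sub
      ((tv.add (tratio.mul tu)).const_mul τm3)
    simp only [one_pow, mul_one, mul_zero, add_zero, sub_self] at h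
    refine h.congr' ?_
    filter_upwards [eventually_ge_atTop 1] with n hn
    have := hs0 n hn
    have := hs0 (n + 1) (by lia)
    simp only [Function.comp]
    field_simp
    linear_combination τm3 * s (n + 1) * hs2' n
  have h := (((((tb'.mul tb).mul (tu.pow 3)).mul tV).add
    (tdA.mul tV)).add ((tb'.mul tV).mul tW)).add
    ((tA'.mul tD).sub ((tA'.mul tb).mul (tu.pow 2)))
  simp only [zero_pow (two_ne_zero), zero_pow (three_ne_zero), mul_zero, zero_mul, zero_add,
    sub_self, add_zero] at h
  have h0 := tendsto_nhds_unique (h.congr' (f₂ := fun _ => (0 : ℂ)) ?_) tendsto_const_nhds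
  · simpa [hq₀'] using h0
  filter_upwards [eventually_ge_atTop 1] with n hn
  linear_combination (s n)⁻¹ ^ 6 * hrec n hn
end

section
/- Let p₋₂, p₋₁, p₋₁', p₀, p₀', q₀, q₀', q₁, q₁' be complex numbers with p₋₂ ≠ 0 and q₀' ≠ 0, and let a, a', b, b' : ℕ → ℂ satisfy a_{n+1} = p₋₂·n² + p₋₁·n + p₀ + O(n^{−1}), a'_n = p₋₂·n² + p₋₁'·n + p₀' + O(n^{−1}) (equal leading coefficients, the class D⁼₂₀), b_{n+1} = q₀ + q₁·n^{−1} + O(n^{−2}), b'_n = q₀' + q₁'·n^{−1} + O(n^{−2}). Suppose X : ℕ → ℂ satisfies the tail recurrence (b'_n·b_{n+1} + a_{n+1})·X_n + b'_n·X_n·X_{n+1} − a'_n·X_{n+1} − a'_n·b_{n+1} = 0 for all n ≥ 1, and X_n = τ₋₂·n + τ₋₁·n^{1/2} + τ₀ + τ₁·n^{−1/2} + O(n^{−1}) for some complex τ₋₂, τ₋₁, τ₀, τ₁. Then τ₋₁·(2τ₋₂·q₀' + p₋₁ − p₋₁' − p₋₂/2) = 0 and τ₀·(2τ₋₂·q₀'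 + p₋₁ − p₋₁') = p₋₁'·q₀ + p₋₂·q₁ − τ₋₁²·q₀' − (q₁' + q₀')·τ₋₂² + (p₋₁' + p₀' − p₀ − q₀'·q₀)·τ₋₂. -/
open Asymptotics Filter

open Topology

/-- `f = c₀ + c₁ t + c₂ t² + o(t²)` along `atTop`. -/
def HasQuadExpansion (t f : ℕ → ℂ) (c₀ c₁ c₂ : ℂ) : Prop :=
  ∃ ε : ℕ → ℂ, Tendsto ε atTop (𝓝 0) ∧
    ∀ᶠ n in atTop, f n = c₀ + c₁ * t n + c₂ * t n ^ 2 + t n ^ 2 * ε n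

namespace HasQuadExpansion

variable {t f g : ℕ → ℂ} {c₀ c₁ c₂ d₀ d₁ d₂ : ℂ}

theorem const (t : ℕ → ℂ) (c : ℂ) : HasQuadExpansion t (fun _ => c) c 0 0 :=
  ⟨fun _ => 0, tendsto_const_nhds, by simp⟩

theorem sq_mul (hf : Tendsto f atTop (𝓝 c₀)) :
    HasQuadExpansion t (fun n => t n ^ 2 * f n) 0 0 c₀ :=
  ⟨fun n => f n - c₀, by simpa using hf.sub_const c₀, .of_forall fun n => by ring⟩

theorem congr (hf : HasQuadExpansion t f c₀ c₁ c₂) (h : ∀ᶠ n in atTop, g n = f n) :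
    HasQuadExpansion t g c₀ c₁ c₂ := by
  obtain ⟨ε, hε, hfε⟩ := hf
  exact ⟨ε, hε, by filter_upwards [hfε, h] with n h₁ h₂ using h₂.trans h₁⟩

theorem add (hf : HasQuadExpansion t f c₀ c₁ c₂) (hg : HasQuadExpansion t g d₀ d₁ d₂) :
    HasQuadExpansion t (fun n => f n + g n) (c₀ + d₀) (c₁ + d₁) (c₂ + d₂) := by
  obtain ⟨ε, hε, hfε⟩ := hf
  obtain ⟨δ, hδ, hgδ⟩ := hg
  refine ⟨fun n => ε n + δ n, by simpa using hε.add hδ, ?_⟩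
  filter_upwards [hfε, hgδ] with n h₁ h₂
  rw [h₁, h₂]
  ring

theorem const_mul (c : ℂ) (hf : HasQuadExpansion t f c₀ c₁ c₂) :
    HasQuadExpansion t (fun n => c * f n) (c * c₀) (c * c₁) (c * c₂) := by
  obtain ⟨ε, hε, hfε⟩ := hf
  refine ⟨fun n => c * ε n, by simpa using hε.const_mul c, ?_⟩
  filter_upwards [hfε] with n h₁
  rw [h₁]
  ring

theorem sub (hf : HasQuadExpansion t f c₀ c₁ c₂) (hg : HasQuadExpansion t g d₀ d₁ d₂) :
    HasQuadExpansion t (fun n => f n - g n) (c₀ - d₀) (c₁ - d₁) (c₂ - d₂) := by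
  simpa [sub_eq_add_neg] using hf.add (hg.const_mul (-1))

theorem mul (ht : Tendsto t atTop (𝓝 0)) (hf : HasQuadExpansion t f c₀ c₁ c₂)
    (hg : HasQuadExpansion t g d₀ d₁ d₂) :
    HasQuadExpansion t (fun n => f n * g n) (c₀ * d₀) (c₀ * d₁ + c₁ * d₀)
      (c₀ * d₂ + c₁ * d₁ + c₂ * d₀) := by
  obtain ⟨ε, hε, hfε⟩ := hf
  obtain ⟨δ, hδ, hgδ⟩ := hg
  refine ⟨fun n => (c₀ + c₁ * t n) * δ n + (d₀ + d₁ * t n) * ε n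
    + t n * (c₁ * d₂ + c₂ * d₁) + t n ^ 2 * ((c₂ + ε n) * (d₂ + δ n)), ?_, ?_⟩
  · have key := (((((ht.const_mul c₁).const_add c₀).mul hδ).add
      (((ht.const_mul d₁).const_add d₀).mul hε)).add (ht.mul_const (c₁ * d₂ + c₂ * d₁))).add
      ((ht.pow 2).mul ((hε.const_add c₂).mul (hδ.const_add d₂)))
    simpa using key
  · filter_upwards [hfε, hgδ] with n h₁ h₂
    rw [h₁, h₂]
    ring

theorem tendsto (ht : Tendsto t atTop (𝓝 0)) (hf : HasQuadExpansion t f c₀ c₁ c₂) :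
    Tendsto f atTop (𝓝 c₀) := by
  obtain ⟨ε, hε, hfε⟩ := hf
  refine Tendsto.congr' (hfε.mono fun n h => h.symm) ?_
  simpa using (((ht.const_mul c₁).const_add c₀).add ((ht.pow 2).const_mul c₂)).add
    ((ht.pow 2).mul hε)

/-- The coefficients up to first order vanish when `f = o(t)`. -/
theorem eq_zero_of_eq_mul (ht : Tendsto t atTop (𝓝 0)) (ht0 : ∀ᶠ n in atTop, t n ≠ 0)
    (hf : HasQuadExpansion t f c₀ c₁ c₂) (hg : Tendsto g atTop (𝓝 0))
    (hfg : ∀ᶠ n in atTop, f n = t n * g n) : c₀ = 0 ∧ c₁ = 0 := by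
  have h₀ : c₀ = 0 := by
    refine tendsto_nhds_unique (hf.tendsto ht) (Tendsto.congr' (hfg.mono fun n h => h.symm) ?_)
    simpa using ht.mul hg
  subst h₀
  refine ⟨rfl, ?_⟩
  obtain ⟨ε, hε, hfε⟩ := hf
  have h₁ : Tendsto (fun n => c₁ + c₂ * t n + t n * ε n) atTop (𝓝 c₁) := by
    simpa using ((ht.const_mul c₂).const_add c₁).add (ht.mul hε)
  refine tendsto_nhds_unique h₁ (Tendsto.congr' ?_ hg)
  filter_upwards [hfε, hfg, ht0] with n h₂ h₃ h₄
  apply mul_left_cancel₀ h₄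
  rw [← h₃, h₂]
  ring

end HasQuadExpansion

/-- A convergent sequence cannot have differences asymptotic to `c / n` with `c ≠ 0`. -/
theorem eq_zero_of_tendsto_of_sub_succ {r ε : ℕ → ℂ} {c l : ℂ} (hr : Tendsto r atTop (𝓝 l))
    (hε : Tendsto ε atTop (𝓝 0))
    (h : ∀ᶠ n : ℕ in atTop, r n - r (n + 1) = (c + ε n) / n) : c = 0 := by
  by_contra hc
  set ρ : ℕ → ℝ := fun n => (r n / c).re with hρ_def
  have hρ : Tendsto ρ atTop (𝓝 (l / c).re) :=
    (Complex.continuous_re.tendsto _).comp (hr.div_const c)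
  have hε' : Tendsto (fun n => (ε n / c).re) atTop (𝓝 0) := by
    simpa [Function.comp_def] using (Complex.continuous_re.tendsto _).comp (hε.div_const c)
  have hev : ∀ᶠ n : ℕ in atTop, 1 / (n : ℝ) ≤ 2 * (ρ n - ρ (n + 1)) := by
    filter_upwards [h, hε'.eventually (lt_mem_nhds (show (-(1 / 2) : ℝ) < 0 by norm_num))]
      with n h₁ h₂
    have h₃ : ρ n - ρ (n + 1) = (1 + (ε n / c).re) / n := by
      simp only [hρ_def]
      rw [← Complex.sub_re, ← sub_div, h₁, div_right_comm, add_div, div_self hc,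
        ← Complex.ofReal_natCast, Complex.div_ofReal_re]
      simp
    rw [h₃, ← mul_div_assoc]
    gcongr
    linarith
  obtain ⟨N, hN⟩ := eventually_atTop.1 hev
  obtain ⟨B, hB⟩ := hρ.bddBelow_range
  refine Real.not_summable_one_div_natCast ((summable_nat_add_iff N).1 ?_)
  refine summable_of_sum_range_le (c := 2 * (ρ N - B)) (fun n => by positivity) fun n => ?_
  have hsum : ∑ k ∈ Finset.range n, 1 / (((k + N : ℕ) : ℝ)) ≤ 2 * (ρ N - ρ (n + N)) := by
    induction n with
    | zero => simp
    | succ n ih =>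
      rw [Finset.sum_range_succ]
      have := hN (n + N) (by omega)
      rw [show n + 1 + N = n + N + 1 by ring]
      linarith
  have := hB ⟨n + N, rfl⟩
  linarith

theorem tendsto_rpow_neg_natCast {s : ℝ} (hs : 0 < s) :
    Tendsto (fun n : ℕ => (n : ℝ) ^ (-s)) atTop (𝓝 0) :=
  (tendsto_rpow_neg_atTop hs).comp tendsto_natCast_atTop_atTop

theorem tendsto_rpowC_neg {s : ℝ} (hs : 0 < s) :
    Tendsto (rpowC (-s)) atTop (𝓝 0) := by
  simpa only [Complex.ofReal_zero] using!
    (Complex.continuous_ofReal.tendsto 0).comp (tendsto_rpow_neg_natCast hs)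

theorem rpowC_add {n : ℕ} (hn : 0 < n) (s u : ℝ) :
    rpowC (s + u) n = rpowC s n * rpowC u n := by
  simp [rpowC, Real.rpow_add (Nat.cast_pos.2 hn)]

theorem rpowC_zero (n : ℕ) : rpowC 0 n = 1 := by simp [rpowC]

theorem rpowC_one (n : ℕ) : rpowC 1 n = n := by simp [rpowC]

theorem rpowC_neg_half_sq {n : ℕ} (hn : 0 < n) :
    rpowC (-(1 / 2)) n ^ 2 = rpowC (-1) n := by
  rw [sq, ← rpowC_add hn]
  norm_num

theorem rpowC_neg_half_sq_mul {n : ℕ} (hn : 0 < n) :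
    rpowC (-(1 / 2)) n ^ 2 * n = 1 := by
  rw [rpowC_neg_half_sq hn, ← rpowC_one, ← rpowC_add hn, neg_add_cancel, rpowC_zero]

theorem rpowC_neg_half_mul {n : ℕ} (hn : 0 < n) :
    rpowC (-(1 / 2)) n * rpowC (1 / 2) n = 1 := by
  rw [← rpowC_add hn, neg_add_cancel, rpowC_zero]

theorem rpowC_half_eq_sqrt (n : ℕ) : rpowC (1 / 2) n = (√(n : ℝ) : ℝ) := by
  rw [rpowC, Real.sqrt_eq_rpow]

theorem rpowC_neg_half_eq_sqrt (n : ℕ) : rpowC (-(1 / 2)) n = ((√(n : ℝ))⁻¹ : ℝ) := by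
  rw [rpowC, Real.sqrt_eq_rpow, Real.rpow_neg n.cast_nonneg]

/-- An error bounded by `|t|³`, where `t = n^{-1/2}`, does not affect the expansion. -/
theorem hasQuadExpansion_of_abs_le_one {f : ℕ → ℂ} {c₀ c₁ c₂ : ℂ}
    (h : ∀ n : ℕ, 0 < n → ∃ x : ℝ, |x| ≤ 1 ∧
      f n = c₀ + c₁ * rpowC (-(1 / 2)) n + c₂ * rpowC (-(1 / 2)) n ^ 2
        + rpowC (-(1 / 2)) n ^ 3 * x) :
    HasQuadExpansion (rpowC (-(1 / 2))) f c₀ c₁ c₂ := by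
  choose! x hx hf using h
  refine ⟨fun n => rpowC (-(1 / 2)) n * x n, ?_, ?_⟩
  · refine squeeze_zero_norm' ?_ (tendsto_zero_iff_norm_tendsto_zero.1
      (tendsto_rpowC_neg (s := 1 / 2) (by norm_num)))
    filter_upwards [eventually_gt_atTop 0] with n hn
    rw [norm_mul, Complex.norm_real, Real.norm_eq_abs]
    exact mul_le_of_le_one_right (norm_nonneg _) (hx n hn)
  · filter_upwards [eventually_gt_atTop 0] with n hn
    rw [hf n hn]
    ring

theorem hasQuadExpansion_rpowC_half_sub :
    HasQuadExpansion (rpowC (-(1 / 2))) (fun n => rpowC (1 / 2) n - rpowC (1 / 2) (n + 1))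
      0 (-(1 / 2)) 0 := by
  refine hasQuadExpansion_of_abs_le_one fun n hn => ?_
  have hu : 0 < √(n : ℝ) := Real.sqrt_pos.2 (Nat.cast_pos.2 hn)
  have huv : √(n : ℝ) ≤ √((n + 1 : ℕ) : ℝ) := Real.sqrt_le_sqrt (by simp)
  have hu2 : √(n : ℝ) ^ 2 = n := Real.sq_sqrt n.cast_nonneg
  have hv2 : √((n + 1 : ℕ) : ℝ) ^ 2 = n + 1 := by
    rw [Real.sq_sqrt (Nat.cast_nonneg _)]; push_cast; ring
  simp only [rpowC_half_eq_sqrt, rpowC_neg_half_eq_sqrt]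
  set u := √(n : ℝ)
  set v := √((n + 1 : ℕ) : ℝ)
  have hdiff : v ^ 2 = u ^ 2 + 1 := by rw [hu2, hv2]
  refine ⟨u ^ 2 / (2 * (u + v) ^ 2), ?_, ?_⟩
  · rw [abs_of_nonneg (by positivity), div_le_one (by positivity)]
    nlinarith
  · have huv0 : u + v ≠ 0 := by positivity
    have : u - v = -(1 / 2) * u⁻¹ + u⁻¹ ^ 3 * (u ^ 2 / (2 * (u + v) ^ 2)) := by
      field_simp
      linear_combination (1 - 2 * u * (u + v)) * hdiff
    simpa using congrArg Complex.ofReal this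

theorem hasQuadExpansion_rpowC_neg_half_sub :
    HasQuadExpansion (rpowC (-(1 / 2)))
      (fun n => rpowC (-(1 / 2)) n - rpowC (-(1 / 2)) (n + 1)) 0 0 0 := by
  refine hasQuadExpansion_of_abs_le_one fun n hn => ?_
  have hu : 0 < √(n : ℝ) := Real.sqrt_pos.2 (Nat.cast_pos.2 hn)
  have huv : √(n : ℝ) ≤ √((n + 1 : ℕ) : ℝ) := Real.sqrt_le_sqrt (by simp)
  have hu2 : √(n : ℝ) ^ 2 = n := Real.sq_sqrt n.cast_nonneg
  have hv2 : √((n + 1 : ℕ) : ℝ) ^ 2 = n + 1 := by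
    rw [Real.sq_sqrt (Nat.cast_nonneg _)]; push_cast; ring
  simp only [rpowC_neg_half_eq_sqrt]
  set u := √(n : ℝ)
  set v := √((n + 1 : ℕ) : ℝ)
  have hdiff : v ^ 2 = u ^ 2 + 1 := by rw [hu2, hv2]
  have hv : 0 < v := hu.trans_le huv
  refine ⟨u ^ 2 / (v * (u + v)), ?_, ?_⟩
  · rw [abs_of_nonneg (by positivity), div_le_one (by positivity)]
    nlinarith
  · have huv0 : u + v ≠ 0 := by positivity
    have : u⁻¹ - v⁻¹ = u⁻¹ ^ 3 * (u ^ 2 / (v * (u + v))) := by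
      field_simp
      linear_combination hdiff
    simpa using congrArg Complex.ofReal this

/-- Coefficients with quadratic growth: `t² f - p n` expands when
`f = p n² + c n + d + o(1)`. -/
theorem hasQuadExpansion_of_quadratic {f : ℕ → ℂ} {p c d : ℂ}
    (hf : (fun n : ℕ => f n - (p * n ^ 2 + c * n + d))
      =O[atTop] fun n : ℕ => (n : ℝ) ^ (-(1 : ℝ))) :
    HasQuadExpansion (rpowC (-(1 / 2)))
      (fun n => rpowC (-(1 / 2)) n ^ 2 * f n - p * n) c 0 d := by
  refine ⟨_, hf.trans_tendsto (tendsto_rpow_neg_natCast one_pos), ?_⟩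
  filter_upwards [eventually_gt_atTop 0] with n hn
  linear_combination (p * n + c) * rpowC_neg_half_sq_mul hn

theorem hasQuadExpansion_of_bounded {f : ℕ → ℂ} {c d : ℂ}
    (hf : (fun n : ℕ => f n - (c + d * rpowC (-1) n))
      =O[atTop] fun n : ℕ => (n : ℝ) ^ (-(2 : ℝ))) :
    HasQuadExpansion (rpowC (-(1 / 2))) f c 0 d := by
  refine ⟨fun n => n * (f n - (c + d * rpowC (-1) n)), ?_, ?_⟩
  · have hn : (fun n : ℕ => (n : ℂ)) =O[atTop] fun n : ℕ => (n : ℝ) :=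
      .of_bound 1 (by simp)
    refine (hn.mul hf).trans_tendsto
      ((tendsto_rpow_neg_natCast one_pos).congr' ?_)
    filter_upwards [eventually_gt_atTop 0] with n hn
    have : (0 : ℝ) < n := Nat.cast_pos.2 hn
    rw [← Real.rpow_one_add' this.le (by norm_num)]
    norm_num
  · filter_upwards [eventually_gt_atTop 0] with n hn
    linear_combination (-(f n - (c + d * rpowC (-1) n))) * rpowC_neg_half_sq_mul hn
      - d * rpowC_neg_half_sq hn

/-- Class D⁼₂₀: the equations satisfied by `τ₋₁` and `τ₀`. -/
theorem stmt7 (pm2 pm1 pm1' p₀ p₀' q₀ q₀' q₁ q₁' : ℂ)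
    (hpm2 : pm2 ≠ 0) (hq₀' : q₀' ≠ 0)
    (a a' b b' : ℕ → ℂ)
    (ha : (fun n : ℕ => a (n + 1) - (pm2 * n ^ 2 + pm1 * n + p₀))
      =O[atTop] fun n : ℕ => (n : ℝ) ^ (-(1 : ℝ)))
    (ha' : (fun n : ℕ => a' n - (pm2 * n ^ 2 + pm1' * n + p₀'))
      =O[atTop] fun n : ℕ => (n : ℝ) ^ (-(1 : ℝ)))
    (hb : (fun n : ℕ => b (n + 1) - (q₀ + q₁ * rpowC (-1) n))
      =O[atTop] fun n : ℕ => (n : ℝ) ^ (-(2 : ℝ)))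
    (hb' : (fun n : ℕ => b' n - (q₀' + q₁' * rpowC (-1) n))
      =O[atTop] fun n : ℕ => (n : ℝ) ^ (-(2 : ℝ)))
    (X : ℕ → ℂ)
    (hrec : ∀ n : ℕ, 1 ≤ n →
      (b' n * b (n + 1) + a (n + 1)) * X n + b' n * X n * X (n + 1)
        - a' n * X (n + 1) - a' n * b (n + 1) = 0)
    (τm2 τm1 τ0 τ1 : ℂ)
    (hX : (fun n : ℕ => X n
        - (τm2 * n + τm1 * rpowC (1 / 2) n + τ0 + τ1 * rpowC (-(1 / 2)) n))
      =O[atTop] fun n : ℕ => (n : ℝ) ^ (-(1 : ℝ))) :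
    τm1 * (2 * τm2 * q₀' + pm1 - pm1' - pm2 / 2) = 0 ∧
      τ0 * (2 * τm2 * q₀' + pm1 - pm1')
        = pm1' * q₀ + pm2 * q₁ - τm1 ^ 2 * q₀' - (q₁' + q₀') * τm2 ^ 2
          + (pm1' + p₀' - p₀ - q₀' * q₀) * τm2 := by
  set t : ℕ → ℂ := rpowC (-(1 / 2)) with ht_def
  have ht : Tendsto t atTop (𝓝 0) := tendsto_rpowC_neg (by norm_num)
  have ht0 : ∀ᶠ n in atTop, t n ≠ 0 := by
    filter_upwards [eventually_gt_atTop 0] with n hn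
    exact left_ne_zero_of_mul_eq_one (rpowC_neg_half_mul hn)
  set r : ℕ → ℂ := fun n => X n
    - (τm2 * n + τm1 * rpowC (1 / 2) n + τ0 + τ1 * rpowC (-(1 / 2)) n) with hr_def
  have hr : Tendsto r atTop (𝓝 0) := hX.trans_tendsto (tendsto_rpow_neg_natCast one_pos)
  have hrt : Tendsto (fun n => rpowC (1 / 2) n * (r n - r (n + 1))) atTop (𝓝 0) := by
    have hO : (fun n => r n - r (n + 1)) =O[atTop] fun n : ℕ => (n : ℝ) ^ (-(1 : ℝ)) := by
      refine hX.sub ((hX.comp_tendsto (tendsto_add_atTop_nat 1)).trans (.of_bound 1 ?_))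
      filter_upwards [eventually_gt_atTop 0] with n hn
      have : (0 : ℝ) < n := Nat.cast_pos.2 hn
      rw [one_mul, Function.comp_apply, Real.norm_of_nonneg (by positivity),
        Real.norm_of_nonneg (by positivity)]
      exact Real.rpow_le_rpow_of_nonpos this (by simp) (by norm_num)
    have hs : rpowC (1 / 2) =O[atTop] fun n : ℕ => (n : ℝ) ^ (1 / 2 : ℝ) :=
      .of_bound 1 (by simp [rpowC])
    refine (hs.mul hO).trans_tendsto
      ((tendsto_rpow_neg_natCast (s := 1 / 2) (by norm_num)).congr' ?_)
    filter_upwards [eventually_gt_atTop 0] with n hn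
    rw [← Real.rpow_add (Nat.cast_pos.2 hn)]
    norm_num
  have hA := hasQuadExpansion_of_quadratic ha
  have hA' := hasQuadExpansion_of_quadratic ha'
  have hB' := hasQuadExpansion_of_bounded hb'
  have hB := hasQuadExpansion_of_bounded hb
  -- the increment of `X` without the remainder
  have hD : HasQuadExpansion t (fun n => X n - X (n + 1) - (r n - r (n + 1)))
      (-τm2) (-τm1 / 2) 0 := by
    have := (((HasQuadExpansion.const t (-τm2)).add
      (hasQuadExpansion_rpowC_half_sub.const_mul τm1)).add
      (hasQuadExpansion_rpowC_neg_half_sub.const_mul τ1)).congr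
      (g := fun n => X n - X (n + 1) - (r n - r (n + 1)))
      (.of_forall fun n => by simp only [hr_def]; push_cast; ring)
    convert this using 1 <;> ring
  have hY : HasQuadExpansion t (fun n => t n ^ 2 * X n) τm2 τm1 τ0 := by
    refine ⟨fun n => τ1 * t n + r n, by simpa using (ht.const_mul τ1).add hr, ?_⟩
    filter_upwards [eventually_gt_atTop 0] with n hn
    have h₁ : t n ^ 2 * n = 1 := rpowC_neg_half_sq_mul hn
    have h₂ : t n * rpowC (1 / 2) n = 1 := rpowC_neg_half_mul hn
    simp only [hr_def, ← ht_def]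
    linear_combination τm2 * h₁ + t n * τm1 * h₂
  have hY' : HasQuadExpansion t (fun n => t n ^ 2 * X (n + 1)) τm2 τm1 (τ0 + τm2) := by
    have hlim : Tendsto (fun n => X n - X (n + 1)) atTop (𝓝 (-τm2)) := by
      simpa using (hD.tendsto ht).add (hr.sub (hr.comp (tendsto_add_atTop_nat 1)))
    have := (hY.sub (HasQuadExpansion.sq_mul hlim)).congr
      (g := fun n => t n ^ 2 * X (n + 1)) (.of_forall fun n => by ring)
    convert this using 1 <;> ring
  have hT : HasQuadExpansion t (fun n => t n ^ 2 * 1) 0 0 1 :=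
    HasQuadExpansion.sq_mul tendsto_const_nhds
  -- the recurrence, multiplied by `t⁴` and solved for the increment of the remainder
  have hR := (((((hD.const_mul pm2).add ((hA.mul ht hY).sub (hA'.mul ht hY'))).add
    (hB'.mul ht (hY.mul ht hY'))).add (hT.mul ht (hB'.mul ht (hB.mul ht hY)))).sub
    (((HasQuadExpansion.const t pm2).add (hT.mul ht hA')).mul ht hB)).const_mul (-pm2⁻¹)
  have hR := hR.congr (g := fun n => r n - r (n + 1)) (by
    filter_upwards [eventually_gt_atTop 0] with n hn
    have h₁ : t n ^ 2 * n = 1 := rpowC_neg_half_sq_mul hn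
    simp only [← ht_def]
    rw [neg_mul, ← mul_neg, eq_inv_mul_iff_mul_eq₀ hpm2]
    linear_combination (t n ^ 4) * hrec n hn
      - pm2 * (X n - X (n + 1) - b (n + 1)) * h₁)
  obtain ⟨h₀, h₁⟩ := hR.eq_zero_of_eq_mul ht ht0 hrt (by
    filter_upwards [eventually_gt_atTop 0] with n hn
    rw [← mul_assoc, rpowC_neg_half_mul hn, one_mul])
  rw [h₀, h₁] at hR
  obtain ⟨ε, hε, hrε⟩ := hR
  have h₂ := eq_zero_of_tendsto_of_sub_succ hr hε (by
    filter_upwards [hrε, eventually_gt_atTop 0] with n hn hn0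
    have hn' : (n : ℂ) ≠ 0 := Nat.cast_ne_zero.2 hn0.ne'
    rw [hn, eq_div_iff hn', zero_mul, zero_add, zero_add, mul_comm (t n ^ 2) (ε n), ← add_mul,
      mul_assoc, rpowC_neg_half_sq_mul hn0, mul_one])
  have hp : -pm2⁻¹ ≠ 0 := neg_ne_zero.2 (inv_ne_zero hpm2)
  replace h₁ := (mul_eq_zero.1 h₁).resolve_left hp
  replace h₂ := (mul_eq_zero.1 h₂).resolve_left hp
  constructor
  · linear_combination h₁
  · linear_combination h₂
end
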